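/- Let X be a semi-inner product C*-module over a C*-algebra A, x₀, y₀, x₁, y₁ ∈ X, (r₁,…,rₙ) a probability vector, p ∈ A, and f = (f₁,…,fₙ), g = (g₁,…,gₙ) tuples of maps A → X Fréchet differentiable at p such that ‖Df(p) − \widehat{(x₀+y₀)/2}‖ ≤ ‖(x₀−y₀)/2‖ and ‖Dg(p) − \widehat{(x₁+y₁)/2}‖ ≤ ‖(x₁−y₁)/2‖, where for x ∈ X, x̂ : A → Xⁿ is the map a ↦ (xa, …, xa). Then for all a ∈ A: ‖Σᵢ rᵢ⟨Dfᵢ(p)(a), Dgᵢ(p)(a)⟩ − ⟨Σᵢ rᵢDfᵢ(p)(a), Σᵢ rᵢDgᵢ(p)(a)⟩‖ ≤ (1/4)‖x₀−y₀‖‖x₁−y₁‖‖a‖². -/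

import Mathlib

/-- A continuous star on a complex C⋆-ring that is compatible with a star order is
conjugate-linear. -/
theorem starModule_complex_of_starOrderedRing {A : Type*} [NormedRing A] [StarRing A]
    [CStarRing A] [PartialOrder A] [StarOrderedRing A] [NormedAlgebra ℂ A] :
    StarModule ℂ A := by
  have hreal : ∀ (c : ℝ) (a : A), star (c • a) = c • star a := fun c a =>
    map_real_smul (starAddEquiv : A ≃+ A) continuous_star c a
  set j : A := algebraMap ℂ A Complex.I with hj
  have hjj : j * j = -1 := by
    rw [hj, ← map_mul, Complex.I_mul_I, map_neg, map_one]
  have hcomm : ∀ a : A, j * a = a * j := fun a => Algebra.commutes _ a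
  have hsjj : star j * star j = -1 := by rw [← star_mul, hjj, star_neg, star_one]
  set e : A := star j * j with he
  have hee : e * e = 1 := by
    rw [he, mul_assoc, ← mul_assoc j, hcomm (star j), mul_assoc, hjj, ← mul_assoc, hsjj]; simp
  have hse : star e = e := by simp [he]
  have hidem : (1 - e) * (1 - e) = (2 : ℝ) • (1 - e) := by
    rw [two_smul, mul_sub, sub_mul, sub_mul, hee]
    simp only [one_mul, mul_one]
    abel
  have hsq : star (1 - e) * (1 - e) = (2 : ℝ) • (1 - e) := by
    rw [star_sub, star_one, hse, hidem]
  have hsqj : star (j * (1 - e)) * (j * (1 - e)) = -((2 : ℝ) • (1 - e)) := by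
    have h1 : star (j * (1 - e)) * (j * (1 - e)) = (1 - e) * e * (1 - e) := by
      rw [star_mul, star_sub, star_one, hse, he]; noncomm_ring
    have h2 : (1 - e) * e = -(1 - e) := by rw [sub_mul, hee]; noncomm_ring
    rw [h1, h2, neg_mul, hidem]
  have h0 : (2 : ℝ) • (1 - e) = 0 := le_antisymm
    (by rw [← neg_nonneg, ← hsqj]; exact star_mul_self_nonneg _)
    (by rw [← hsq]; exact star_mul_self_nonneg _)
  have he1 : e = 1 := by
    have := (smul_eq_zero.mp h0).resolve_left two_ne_zero
    exact (sub_eq_zero.mp this).symm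
  have hsj : star j = -j := by
    calc star j = star j * -(j * j) := by rw [hjj]; simp
      _ = -(e * j) := by rw [he]; noncomm_ring
      _ = -j := by rw [he1, one_mul]
  have hI : ∀ a : A, star (Complex.I • a) = -(Complex.I • star a) := fun a => by
    rw [Algebra.smul_def, Algebra.smul_def, star_mul, ← hj, hsj, hcomm]; simp
  refine ⟨fun z a => ?_⟩
  have hz : ∀ (z : ℂ) (b : A), z • b = z.re • b + z.im • (Complex.I • b) := fun z b => by
    conv_lhs => rw [← Complex.re_add_im z]
    rw [add_smul, mul_smul, Complex.coe_smul, Complex.coe_smul]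
  rw [hz z a, hz (star z), star_add, hreal, hreal, hI]
  simp

theorem norm_sq_le_mul_norm_of_forall_nonneg {A : Type*} [CStarAlgebra A] [PartialOrder A]
    [StarOrderedRing A] {P Q c : A} {K : ℝ} (hP : 0 ≤ P) (hPK : ‖P‖ ≤ K) (hK : 0 < K)
    (h : ∀ b : A, 0 ≤ star b * P * b - star b * c - star c * b + Q) :
    ‖c‖ ^ 2 ≤ K * ‖Q‖ := by
  have h1 : star c * P * c ≤ K • (star c * c) :=
    (CStarAlgebra.star_left_conjugate_le_norm_smul (IsSelfAdjoint.of_nonneg hP)).trans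
      (smul_le_smul_of_nonneg_right hPK (star_mul_self_nonneg c))
  have h2 := h (K⁻¹ • c)
  have h3 : K⁻¹ • (star c * c) ≤ Q := by
    have h4 : (K⁻¹ * K⁻¹) • (star c * P * c) ≤ K⁻¹ • (star c * c) := by
      calc _ ≤ (K⁻¹ * K⁻¹) • (K • (star c * c)) :=
            smul_le_smul_of_nonneg_left h1 (by positivity)
        _ = _ := by rw [smul_smul]; congr 1; field_simp
    simp only [star_smul, star_trivial, smul_mul_assoc, mul_smul_comm, smul_smul] at h2
    rw [← sub_nonneg]
    refine (add_nonneg h2 (sub_nonneg.mpr h4)).trans_eq ?_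
    abel
  have h5 := CStarAlgebra.norm_le_norm_of_nonneg_of_le
    (smul_nonneg (inv_nonneg.mpr hK.le) (star_mul_self_nonneg c)) h3
  rw [norm_smul, CStarRing.norm_star_mul_self, Real.norm_of_nonneg (inv_nonneg.mpr hK.le),
    inv_mul_le_iff₀ hK] at h5
  rwa [sq]

section Covariance

variable {M N : Type*} [AddCommGroup M] [Module ℝ M] [AddCommGroup N] [Module ℝ N]
  {ι : Type*} [Fintype ι]

/-- The covariance of two tuples with respect to the weights `r` and the bilinear map `B`. -/
def weightedCov (B : M →ₗ[ℝ] M →ₗ[ℝ] N) (r : ι → ℝ) (u v : ι → M) : N :=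
  ∑ i, r i • B (u i) (v i) - B (∑ i, r i • u i) (∑ i, r i • v i)

theorem weightedCov_sub_const (B : M →ₗ[ℝ] M →ₗ[ℝ] N) {r : ι → ℝ} (hr : ∑ i, r i = 1)
    (u v : ι → M) (w z : M) :
    weightedCov B r (fun i => u i - w) (fun i => v i - z) = weightedCov B r u v := by
  have hw : ∀ (t : ι → M) (w : M), ∑ i, r i • (t i - w) = ∑ i, r i • t i - w := fun t w => by
    simp only [smul_sub, Finset.sum_sub_distrib, ← Finset.sum_smul, hr, one_smul]
  have h1 : ∑ i, r i • B (u i) z = B (∑ i, r i • u i) z := by simp [map_sum]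
  have h2 : ∑ i, r i • B w (v i) = B w (∑ i, r i • v i) := by simp [map_sum]
  have h3 : ∑ i, r i • B w z = B w z := by rw [← Finset.sum_smul, hr, one_smul]
  simp only [weightedCov, hw]
  simp only [map_sub, LinearMap.sub_apply, smul_sub, Finset.sum_sub_distrib, h1, h2, h3]
  abel

theorem weightedCov_eq_sum_centered (B : M →ₗ[ℝ] M →ₗ[ℝ] N) {r : ι → ℝ} (hr : ∑ i, r i = 1)
    (u v : ι → M) :
    weightedCov B r u v =
      ∑ i, r i • B (u i - ∑ k, r k • u k) (v i - ∑ k, r k • v k) := by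
  rw [← weightedCov_sub_const B hr u v (∑ k, r k • u k) (∑ k, r k • v k), weightedCov]
  have : ∑ i, r i • (u i - ∑ k, r k • u k) = 0 := by
    rw [Finset.sum_congr rfl fun i _ => smul_sub (r i) (u i) _, Finset.sum_sub_distrib,
      ← Finset.sum_smul, hr, one_smul, sub_self]
  rw [this, map_zero, LinearMap.zero_apply, sub_zero]

end Covariance

section Gruss

variable {A : Type*} [CStarAlgebra A] [PartialOrder A] [StarOrderedRing A]
  {X : Type*} [AddCommGroup X] [Module ℝ X] {ι : Type*} [Fintype ι]

theorem weightedCov_self_nonneg {B : X →ₗ[ℝ] X →ₗ[ℝ] A} (hpos : ∀ x, 0 ≤ B x x)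
    {r : ι → ℝ} (hr : ∀ i, 0 ≤ r i) (hr1 : ∑ i, r i = 1) (u : ι → X) :
    0 ≤ weightedCov B r u u := by
  rw [weightedCov_eq_sum_centered B hr1]
  exact Finset.sum_nonneg fun i _ => smul_nonneg (hr i) (hpos _)

theorem norm_weightedCov_self_le {B : X →ₗ[ℝ] X →ₗ[ℝ] A} (hpos : ∀ x, 0 ≤ B x x)
    {r : ι → ℝ} (hr : ∀ i, 0 ≤ r i) (hr1 : ∑ i, r i = 1) (u : ι → X) :
    ‖weightedCov B r u u‖ ≤ ‖∑ i, B (u i) (u i)‖ := by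
  refine CStarAlgebra.norm_le_norm_of_nonneg_of_le (weightedCov_self_nonneg hpos hr hr1 u) ?_
  refine (sub_le_self _ (hpos _)).trans (Finset.sum_le_sum fun i _ => ?_)
  have hri : r i ≤ 1 := hr1 ▸ Finset.single_le_sum (fun k _ => hr k) (Finset.mem_univ i)
  simpa using smul_le_smul_of_nonneg_right hri (hpos (u i))

/-- The Cauchy–Schwarz inequality for the covariance of tuples in a semi-inner product
C⋆-module. -/
theorem norm_weightedCov_sq_le {B : X →ₗ[ℝ] X →ₗ[ℝ] A} (hpos : ∀ x, 0 ≤ B x x)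
    (hstar : ∀ x y, star (B x y) = B y x) {act : X → A → X}
    (hact : ∀ x y a, B x (act y a) = B x y * a)
    {r : ι → ℝ} (hr : ∀ i, 0 ≤ r i) (hr1 : ∑ i, r i = 1) (u v : ι → X) :
    ‖weightedCov B r u v‖ ^ 2 ≤ ‖weightedCov B r u u‖ * ‖weightedCov B r v v‖ := by
  have hact' : ∀ x y a, B (act x a) y = star a * B x y := fun x y a => by
    rw [← hstar, hact, star_mul, hstar]
  have key : ∀ b : A, 0 ≤ star b * weightedCov B r u u * b - star b * weightedCov B r u v
      - star (weightedCov B r u v) * b + weightedCov B r v v := fun b => by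
    simp only [weightedCov_eq_sum_centered B hr1]
    set e : ι → X := fun i => u i - ∑ k, r k • u k
    set d : ι → X := fun i => v i - ∑ k, r k • v k
    have h0 : 0 ≤ ∑ i, r i • B (act (e i) b - d i) (act (e i) b - d i) :=
      Finset.sum_nonneg fun i _ => smul_nonneg (hr i) (hpos _)
    refine h0.trans_eq ?_
    simp only [star_sum, star_smul, star_trivial, hstar, Finset.mul_sum, Finset.sum_mul,
      ← Finset.sum_sub_distrib, ← Finset.sum_add_distrib]
    refine Finset.sum_congr rfl fun i _ => ?_
    simp only [map_sub, LinearMap.sub_apply, hact, hact', smul_mul_assoc, mul_smul_comm,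
      ← smul_sub, ← smul_add]
    congr 1
    simp only [e, d, map_sub, LinearMap.sub_apply, mul_assoc]
    abel
  have hlim : Filter.Tendsto (fun ε : ℝ => (‖weightedCov B r u u‖ + ε) * ‖weightedCov B r v v‖)
      (nhdsWithin 0 (Set.Ioi 0)) (nhds (‖weightedCov B r u u‖ * ‖weightedCov B r v v‖)) := by
    refine tendsto_nhdsWithin_of_tendsto_nhds ?_
    have : Continuous fun ε : ℝ => (‖weightedCov B r u u‖ + ε) * ‖weightedCov B r v v‖ := by
      fun_prop
    simpa using this.tendsto 0
  refine ge_of_tendsto hlim (eventually_nhdsWithin_of_forall fun ε (hε : 0 < ε) => ?_)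
  exact norm_sq_le_mul_norm_of_forall_nonneg (weightedCov_self_nonneg hpos hr hr1 u)
    (le_add_of_nonneg_right hε.le) (add_pos_of_nonneg_of_pos (norm_nonneg _) hε) key

/-- The Grüss inequality for tuples lying close to constant tuples in a semi-inner product
C⋆-module. -/
theorem norm_weightedCov_le {B : X →ₗ[ℝ] X →ₗ[ℝ] A} (hpos : ∀ x, 0 ≤ B x x)
    (hstar : ∀ x y, star (B x y) = B y x) {act : X → A → X}
    (hact : ∀ x y a, B x (act y a) = B x y * a)
    {r : ι → ℝ} (hr : ∀ i, 0 ≤ r i) (hr1 : ∑ i, r i = 1) (u v : ι → X) (w z : X) :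
    ‖weightedCov B r u v‖ ≤
      √‖∑ i, B (u i - w) (u i - w)‖ * √‖∑ i, B (v i - z) (v i - z)‖ := by
  rw [← Real.sqrt_mul (norm_nonneg _), ← weightedCov_sub_const B hr1 u v w z]
  refine Real.le_sqrt_of_sq_le ((norm_weightedCov_sq_le hpos hstar hact hr hr1 _ _).trans ?_)
  exact mul_le_mul (norm_weightedCov_self_le hpos hr hr1 _)
    (norm_weightedCov_self_le hpos hr hr1 _) (norm_nonneg _) (norm_nonneg _)

end Gruss


/-- Grüss type inequality in D_p(A,Xⁿ): if ‖Df(p) − \hat{(x₀+y₀)/2}‖ ≤ ‖(x₀−y₀)/2‖ and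
‖Dg(p) − \hat{(x₁+y₁)/2}‖ ≤ ‖(x₁−y₁)/2‖ (operator norms, with Xⁿ carrying the norm
‖u‖ = ‖Σᵢ⟨uᵢ,uᵢ⟩‖^{1/2}), then for all a ∈ A,
‖Σᵢ rᵢ⟨Dfᵢ(p)(a), Dgᵢ(p)(a)⟩ − ⟨Σᵢ rᵢDfᵢ(p)(a), Σᵢ rᵢDgᵢ(p)(a)⟩‖
  ≤ (1/4)‖x₀−y₀‖‖x₁−y₁‖‖a‖². -/
theorem stmt_8 {A : Type*} [NormedRing A] [StarRing A] [CStarRing A] [PartialOrder A]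
    [StarOrderedRing A] [NormedAlgebra ℂ A] [CompleteSpace A]
    {X : Type*} [NormedAddCommGroup X] [NormedSpace ℝ X]
    (smul : X → A → X)
    (ip : X → X → A)
    (h_add : ∀ x y z : X, ip x (y + z) = ip x y + ip x z)
    (h_add' : ∀ x y z : X, ip (x + y) z = ip x z + ip y z)
    (h_smul : ∀ (x y : X) (a : A), ip x (smul y a) = ip x y * a)
    (h_rsmul : ∀ (c : ℝ) (x y : X), ip x (c • y) = c • ip x y)
    (h_rsmul' : ∀ (c : ℝ) (x y : X), ip (c • x) y = c • ip x y)
    (h_star : ∀ x y : X, star (ip x y) = ip y x)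
    (h_pos : ∀ x : X, 0 ≤ ip x x)
    (h_norm : ∀ x : X, ‖x‖ = Real.sqrt ‖ip x x‖)
    (x₀ y₀ x₁ y₁ : X)
    (n : ℕ) (r : Fin n → ℝ) (hr : ∀ i, 0 ≤ r i) (hr1 : ∑ i, r i = 1)
    (f g : Fin n → A → X) (f' g' : Fin n → A →L[ℝ] X) (p : A)
    (hf : ∀ i, HasFDerivAt (f i) (f' i) p) (hg : ∀ i, HasFDerivAt (g i) (g' i) p)
    (hfop : ∀ b : A,
      Real.sqrt ‖∑ i, ip (f' i b - smul ((2⁻¹ : ℝ) • (x₀ + y₀)) b)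
                       (f' i b - smul ((2⁻¹ : ℝ) • (x₀ + y₀)) b)‖
        ≤ ‖(2⁻¹ : ℝ) • (x₀ - y₀)‖ * ‖b‖)
    (hgop : ∀ b : A,
      Real.sqrt ‖∑ i, ip (g' i b - smul ((2⁻¹ : ℝ) • (x₁ + y₁)) b)
                       (g' i b - smul ((2⁻¹ : ℝ) • (x₁ + y₁)) b)‖
        ≤ ‖(2⁻¹ : ℝ) • (x₁ - y₁)‖ * ‖b‖) :
    ∀ a : A,
      ‖(∑ i, r i • ip (f' i a) (g' i a))
          - ip (∑ i, r i • (f' i a)) (∑ i, r i • (g' i a))‖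
        ≤ (1 / 4) * ‖x₀ - y₀‖ * ‖x₁ - y₁‖ * ‖a‖ ^ 2 := by
  intro a
  have : StarModule ℂ A := starModule_complex_of_starOrderedRing
  let _ : CStarAlgebra A := {}
  let B : X →ₗ[ℝ] X →ₗ[ℝ] A := LinearMap.mk₂ ℝ ip h_add' h_rsmul' h_add h_rsmul
  have key := norm_weightedCov_le (B := B) h_pos h_star h_smul hr hr1 (fun i => f' i a)
    (fun i => g' i a) (smul ((2⁻¹ : ℝ) • (x₀ + y₀)) a) (smul ((2⁻¹ : ℝ) • (x₁ + y₁)) a)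
  refine (key.trans (mul_le_mul (hfop a) (hgop a) (Real.sqrt_nonneg _) (by positivity))).trans_eq
    ?_
  rw [norm_smul, norm_smul, Real.norm_of_nonneg (by norm_num : (0 : ℝ) ≤ 2⁻¹)]
  ring
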